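/- Let 1 ≤ p ≤ q ≤ ∞, 1/p = 1/q + 1/r, and let X be a positive semidefinite operator on ℂ^d ⊗ ℂ^{d'}. Then sup over A, B ∈ M_d(ℂ) with ‖A‖_{S_{2r}}, ‖B‖_{S_{2r}} ≤ 1 of ‖(A⊗I) X (B⊗I)‖_{S_p} equals the same supremum restricted to B = A* with A positive semidefinite; in particular for positive X, ‖(A⊗I)X(B⊗I)‖_{S_p} ≤ max(‖(A⊗I)X(A*⊗I)‖_{S_p}, ‖(B*⊗I)X(B⊗I)‖_{S_p}). -/

import Mathlib

open scoped Kronecker ComplexOrder ENNReal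
open Matrix

/-- Operator (spectral) norm of a rectangular complex matrix. -/
noncomputable def opN {α β : Type*} [Fintype α] [Fintype β] [DecidableEq β]
    (M : Matrix α β ℂ) : ℝ :=
  ‖LinearMap.toContinuousLinearMap (Matrix.toEuclideanLin M)‖

/-- Schatten `p`-norm of a square complex matrix: `(∑ singular values ^ p)^{1/p}`. -/
noncomputable def sNorm {n : Type*} [Fintype n] [DecidableEq n] (p : ℝ)
    (M : Matrix n n ℂ) : ℝ :=
  (∑ i, ((Matrix.posSemidef_conjTranspose_mul_self M).1.eigenvalues i) ^ (p / 2)) ^ (1 / p)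

/-- Schatten norm with exponent in `ℝ≥0∞`, the exponent `p = ∞` giving the operator norm. -/
noncomputable def sNormE {n : Type*} [Fintype n] [DecidableEq n] (p : ℝ≥0∞)
    (M : Matrix n n ℂ) : ℝ :=
  if p = ⊤ then opN M else sNorm p.toReal M

/-!
Write `X = Zᴴ * Z`. Hölder's inequality gives
`‖M X N‖_p = ‖(M Zᴴ) (Z N)‖_p ≤ ‖M Zᴴ‖_{2p} ‖Z N‖_{2p}`, and `‖M Zᴴ‖_{2p}² = ‖M X Mᴴ‖_p`,
`‖Z N‖_{2p}² = ‖Nᴴ X N‖_p`; bounding the product by the larger square yields the inequality with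
the maximum. Since `‖M Zᴴ‖_{2p}` depends on `M` only through `Mᴴ * M`, replacing `A` by its absolute
value changes neither its norm nor `‖(A ⊗ 1) X (Aᴴ ⊗ 1)‖_p`, so the supremum may be restricted to
positive semidefinite `A`.

For Hölder's inequality, let `v i` and `w i` be the right and left singular vectors of `K * L`; its
nonzero singular values are `⟪Kᴴ (w i), L (v i)⟫ ≤ ‖Kᴴ (w i)‖ * ‖L (v i)‖`. By the inequalities of
Jensen and Bessel, an orthonormal family `u` satisfies `∑ i, ‖M (u i)‖ ^ a ≤ ∑ j, σ j ^ a` for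
`2 ≤ a`, where `σ j` are the singular values of `M`, so the scalar Hölder inequality concludes.
-/

open scoped MatrixOrder Matrix.Norms.L2Operator in
lemma exists_eq_conjTranspose_mul_self {n : Type*} [Fintype n] {X : Matrix n n ℂ}
    (hX : X.PosSemidef) : ∃ Z : Matrix n n ℂ, X = Zᴴ * Z := by
  classical exact CStarAlgebra.nonneg_iff_eq_star_mul_self.1 hX.nonneg

section SingularValues

variable {n : Type*} [Fintype n] [DecidableEq n]

/-- The singular values of a square matrix `M`: the square roots of the eigenvalues of `Mᴴ * M`,
enumerated with multiplicity by the index type of `M`. -/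
noncomputable def singularValues (M : Matrix n n ℂ) (i : n) : ℝ :=
  √((posSemidef_conjTranspose_mul_self M).1.eigenvalues i)

lemma singularValues_nonneg (M : Matrix n n ℂ) (i : n) : 0 ≤ singularValues M i :=
  Real.sqrt_nonneg _

lemma sum_singularValues_rpow_nonneg (p : ℝ) (M : Matrix n n ℂ) :
    0 ≤ ∑ i, singularValues M i ^ p :=
  Finset.sum_nonneg fun i _ => Real.rpow_nonneg (singularValues_nonneg M i) p

lemma sq_singularValues (M : Matrix n n ℂ) (i : n) :
    singularValues M i ^ 2 = (posSemidef_conjTranspose_mul_self M).1.eigenvalues i :=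
  Real.sq_sqrt ((posSemidef_conjTranspose_mul_self M).eigenvalues_nonneg i)

lemma singularValues_congr {M N : Matrix n n ℂ} (h : (Mᴴ * M).charpoly = (Nᴴ * N).charpoly) :
    singularValues M = singularValues N := by
  have heig := (IsHermitian.eigenvalues_eq_eigenvalues_iff
    (posSemidef_conjTranspose_mul_self M).1 (posSemidef_conjTranspose_mul_self N).1).2 h
  ext i
  rw [singularValues, singularValues, heig]

lemma singularValues_conjTranspose (M : Matrix n n ℂ) :
    singularValues Mᴴ = singularValues M :=
  singularValues_congr (by rw [conjTranspose_conjTranspose, charpoly_mul_comm])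

lemma map_eigenvalues_cfc {A : Matrix n n ℂ} (hA : A.IsHermitian) (f : ℝ → ℝ)
    (hfA : (cfc f A).IsHermitian) :
    Finset.univ.val.map hfA.eigenvalues = Finset.univ.val.map fun i => f (hA.eigenvalues i) := by
  apply Multiset.map_injective Complex.ofReal_injective
  have hroots := hfA.roots_charpoly_eq_eigenvalues
  rw [hA.charpoly_cfc_eq, Finset.prod_eq_multiset_prod] at hroots
  have hprod := Polynomial.roots_multiset_prod_X_sub_C
    (Finset.univ.val.map fun i => (f (hA.eigenvalues i) : ℂ))
  rw [Multiset.map_map] at hprod ⊢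
  rw [Multiset.map_map]
  exact hroots.symm.trans hprod

lemma sum_singularValues_conjTranspose_mul_self {E : Type*} [AddCommMonoid E]
    (M : Matrix n n ℂ) (f : ℝ → E) :
    ∑ i, f (singularValues (Mᴴ * M) i) = ∑ i, f (singularValues M i ^ 2) := by
  have hT := posSemidef_conjTranspose_mul_self M
  have hcfc : (Mᴴ * M)ᴴ * (Mᴴ * M) = cfc (· ^ 2 : ℝ → ℝ) (Mᴴ * M) := by
    rw [cfc_pow_id (Mᴴ * M) 2 hT.1.isSelfAdjoint, hT.1.eq, pow_two]
  have hTT := (posSemidef_conjTranspose_mul_self (Mᴴ * M)).1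
  have hmap : Finset.univ.val.map hTT.eigenvalues =
      Finset.univ.val.map fun i => hT.1.eigenvalues i ^ 2 := by
    simp only [hcfc]
    exact map_eigenvalues_cfc hT.1 (· ^ 2) (hcfc ▸ hTT)
  have hsum := congr_arg (fun s : Multiset ℝ => (s.map fun x => f √x).sum) hmap
  simp only [Multiset.map_map, Function.comp_def, Real.sqrt_sq (hT.eigenvalues_nonneg _)] at hsum
  simp only [sq_singularValues]
  exact hsum

/-- An orthonormal basis of right singular vectors of `M`, i.e. of eigenvectors of `Mᴴ * M`,
indexed like `singularValues M`. -/
noncomputable def rightSingularBasis (M : Matrix n n ℂ) :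
    OrthonormalBasis n ℂ (EuclideanSpace ℂ n) :=
  (posSemidef_conjTranspose_mul_self M).1.eigenvectorBasis

lemma conjTranspose_mul_self_apply_rightSingularBasis (M : Matrix n n ℂ) (i : n) :
    toEuclideanCLM (𝕜 := ℂ) (Mᴴ * M) (rightSingularBasis M i) =
      ((singularValues M i ^ 2 : ℝ) : ℂ) • rightSingularBasis M i := by
  apply WithLp.ofLp_injective 2
  rw [ofLp_toEuclideanCLM, rightSingularBasis, IsHermitian.mulVec_eigenvectorBasis,
    sq_singularValues]
  simp

lemma inner_conjTranspose_mul_apply (K L : Matrix n n ℂ) (x y : EuclideanSpace ℂ n) :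
    inner ℂ x (toEuclideanCLM (𝕜 := ℂ) (Kᴴ * L) y) =
      inner ℂ (toEuclideanCLM (𝕜 := ℂ) K x) (toEuclideanCLM (𝕜 := ℂ) L y) := by
  rw [← star_eq_conjTranspose, map_mul, map_star, ContinuousLinearMap.star_eq_adjoint,
    mul_apply_eq_comp, ContinuousLinearMap.adjoint_inner_right]

lemma inner_apply_rightSingularBasis (M : Matrix n n ℂ) (x : EuclideanSpace ℂ n) (i : n) :
    inner ℂ (toEuclideanCLM (𝕜 := ℂ) M x) (toEuclideanCLM (𝕜 := ℂ) M (rightSingularBasis M i)) =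
      (singularValues M i : ℂ) ^ 2 * inner ℂ x (rightSingularBasis M i) := by
  rw [← inner_conjTranspose_mul_apply, conjTranspose_mul_self_apply_rightSingularBasis,
    inner_smul_right, Complex.ofReal_pow]

lemma norm_apply_sq (M : Matrix n n ℂ) (x : EuclideanSpace ℂ n) :
    ‖toEuclideanCLM (𝕜 := ℂ) M x‖ ^ 2 =
      ∑ i, ‖inner ℂ x (rightSingularBasis M i)‖ ^ 2 * singularValues M i ^ 2 := by
  have hexpand :
      inner ℂ (toEuclideanCLM (𝕜 := ℂ) M x) (toEuclideanCLM (𝕜 := ℂ) M x) =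
        ∑ i, (‖inner ℂ x (rightSingularBasis M i)‖ : ℂ) ^ 2 * (singularValues M i : ℂ) ^ 2 := by
    rw [← inner_conjTranspose_mul_apply, ← (rightSingularBasis M).sum_inner_mul_inner]
    refine Finset.sum_congr rfl fun i _ => ?_
    rw [inner_conjTranspose_mul_apply, ← inner_conj_symm (toEuclideanCLM (𝕜 := ℂ) M _),
      inner_apply_rightSingularBasis, map_mul, mul_left_comm, Complex.mul_conj', map_pow,
      Complex.conj_ofReal, mul_comm]
  rw [inner_self_eq_norm_sq_to_K] at hexpand
  exact Complex.ofReal_injective (by simpa using hexpand)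

lemma norm_apply_rightSingularBasis (M : Matrix n n ℂ) (i : n) :
    ‖toEuclideanCLM (𝕜 := ℂ) M (rightSingularBasis M i)‖ = singularValues M i := by
  have h := inner_apply_rightSingularBasis M (rightSingularBasis M i) i
  rw [inner_self_eq_norm_sq_to_K, inner_self_eq_norm_sq_to_K, (rightSingularBasis M).norm_eq_one,
    RCLike.ofReal_one, one_pow, mul_one] at h
  exact (sq_eq_sq₀ (norm_nonneg _) (singularValues_nonneg M i)).1
    (Complex.ofReal_injective (by simpa using h))

lemma sum_norm_apply_rpow_le (M : Matrix n n ℂ) {p : ℝ} (hp : 2 ≤ p) {ι : Type*} [Fintype ι]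
    {w : ι → EuclideanSpace ℂ n} (hw : Orthonormal ℂ w) :
    ∑ i, ‖toEuclideanCLM (𝕜 := ℂ) M (w i)‖ ^ p ≤ ∑ j, singularValues M j ^ p := by
  set v := rightSingularBasis M
  have sq_rpow_half {a : ℝ} (ha : 0 ≤ a) : (a ^ 2) ^ (p / 2) = a ^ p := by
    rw [← Real.rpow_natCast_mul ha, Nat.cast_ofNat, mul_div_cancel₀ p two_ne_zero]
  have jensen (i : ι) : ‖toEuclideanCLM (𝕜 := ℂ) M (w i)‖ ^ p ≤
      ∑ j, ‖inner ℂ (w i) (v j)‖ ^ 2 * singularValues M j ^ p := by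
    have hweights : ∑ j, ‖inner ℂ (w i) (v j)‖ ^ 2 = 1 := by
      rw [v.sum_sq_norm_inner_left, hw.1, one_pow]
    rw [← sq_rpow_half (norm_nonneg _), norm_apply_sq]
    simpa only [sq_rpow_half (singularValues_nonneg M _)] using
      Real.rpow_arith_mean_le_arith_mean_rpow Finset.univ _ _ (fun _ _ => sq_nonneg _) hweights
        (fun j _ => sq_nonneg (singularValues M j)) (p := p / 2) (by linarith)
  have bessel (j : n) : ∑ i, ‖inner ℂ (w i) (v j)‖ ^ 2 ≤ 1 := by
    simpa using hw.sum_inner_products_le (v j) (s := Finset.univ)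
  calc ∑ i, ‖toEuclideanCLM (𝕜 := ℂ) M (w i)‖ ^ p
      ≤ ∑ i, ∑ j, ‖inner ℂ (w i) (v j)‖ ^ 2 * singularValues M j ^ p :=
        Finset.sum_le_sum fun i _ => jensen i
    _ = ∑ j, (∑ i, ‖inner ℂ (w i) (v j)‖ ^ 2) * singularValues M j ^ p := by
        rw [Finset.sum_comm]
        simp only [Finset.sum_mul]
    _ ≤ ∑ j, singularValues M j ^ p :=
        Finset.sum_le_sum fun j _ =>
          mul_le_of_le_one_left (Real.rpow_nonneg (singularValues_nonneg M j) p) (bessel j)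

/-- The left singular vectors of `M` belonging to its nonzero singular values, obtained by
normalizing the images of the right singular vectors. Only nonzero singular values are used as
indices, so that the family is orthonormal. -/
noncomputable def leftSingularVector (M : Matrix n n ℂ) (i : {i // singularValues M i ≠ 0}) :
    EuclideanSpace ℂ n :=
  (singularValues M i : ℂ)⁻¹ • toEuclideanCLM (𝕜 := ℂ) M (rightSingularBasis M i)

lemma inner_leftSingularVector_apply (M : Matrix n n ℂ) (i : {i // singularValues M i ≠ 0})
    (j : n) :
    inner ℂ (leftSingularVector M i) (toEuclideanCLM (𝕜 := ℂ) M (rightSingularBasis M j)) =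
      if (i : n) = j then (singularValues M j : ℂ) else 0 := by
  have hi : (singularValues M i : ℂ) ≠ 0 := Complex.ofReal_ne_zero.2 i.2
  rw [leftSingularVector, inner_smul_left, inner_apply_rightSingularBasis,
    orthonormal_iff_ite.1 (rightSingularBasis M).orthonormal, map_inv₀, Complex.conj_ofReal]
  split_ifs with hij
  · subst hij
    field_simp
  · simp only [mul_zero]

lemma orthonormal_leftSingularVector (M : Matrix n n ℂ) :
    Orthonormal ℂ (leftSingularVector M) := by
  rw [orthonormal_iff_ite]
  intro i j
  have hj : (singularValues M j : ℂ) ≠ 0 := Complex.ofReal_ne_zero.2 j.2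
  conv_lhs => rw [leftSingularVector.eq_def M j]
  rw [inner_smul_right, inner_leftSingularVector_apply]
  simp only [Subtype.coe_inj, mul_ite, mul_zero, inv_mul_cancel₀ hj]

end SingularValues

section SchattenNorm

variable {n : Type*} [Fintype n] [DecidableEq n]

open scoped Matrix.Norms.L2Operator

lemma norm_singularValues (M : Matrix n n ℂ) : ‖singularValues M‖ = ‖M‖ := by
  refine le_antisymm ((pi_norm_le_iff_of_nonneg (norm_nonneg _)).2 fun i => ?_)
    (ContinuousLinearMap.opNorm_le_bound _ (norm_nonneg _) fun x => ?_)
  · rw [Real.norm_of_nonneg (singularValues_nonneg M i), ← norm_apply_rightSingularBasis]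
    exact ContinuousLinearMap.unit_le_opNorm _ _ ((rightSingularBasis M).norm_eq_one i).le
  · refine (sq_le_sq₀ (norm_nonneg _) (by positivity)).1 ?_
    calc ‖toEuclideanCLM (𝕜 := ℂ) M x‖ ^ 2
        = ∑ i, ‖inner ℂ x (rightSingularBasis M i)‖ ^ 2 * singularValues M i ^ 2 :=
          norm_apply_sq M x
      _ ≤ ∑ i, ‖inner ℂ x (rightSingularBasis M i)‖ ^ 2 * ‖singularValues M‖ ^ 2 := by
          gcongr with i
          · exact singularValues_nonneg M i
          · exact (Real.le_norm_self _).trans (norm_le_pi_norm _ i)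
      _ = (‖singularValues M‖ * ‖x‖) ^ 2 := by
          rw [← Finset.sum_mul, (rightSingularBasis M).sum_sq_norm_inner_left, mul_pow, mul_comm]

lemma sNorm_eq (p : ℝ) (M : Matrix n n ℂ) :
    sNorm p M = (∑ i, singularValues M i ^ p) ^ (1 / p) := by
  have hpow (i : n) : singularValues M i ^ p =
      (posSemidef_conjTranspose_mul_self M).1.eigenvalues i ^ (p / 2) := by
    rw [← sq_singularValues, ← Real.rpow_natCast_mul (singularValues_nonneg M i), Nat.cast_ofNat,
      mul_div_cancel₀ p two_ne_zero]
  simp only [sNorm, hpow]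

lemma sNorm_nonneg (p : ℝ) (M : Matrix n n ℂ) : 0 ≤ sNorm p M :=
  sNorm_eq p M ▸ Real.rpow_nonneg (sum_singularValues_rpow_nonneg p M) _

lemma sNormE_top (M : Matrix n n ℂ) : sNormE ⊤ M = ‖M‖ := if_pos rfl

lemma sNormE_of_ne_top {p : ℝ≥0∞} (hp : p ≠ ⊤) (M : Matrix n n ℂ) :
    sNormE p M = sNorm p.toReal M := if_neg hp

lemma sNormE_nonneg (p : ℝ≥0∞) (M : Matrix n n ℂ) : 0 ≤ sNormE p M := by
  rcases eq_or_ne p ⊤ with rfl | hp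
  · exact sNormE_top M ▸ norm_nonneg M
  · exact sNormE_of_ne_top hp M ▸ sNorm_nonneg _ M

lemma sNormE_congr {M N : Matrix n n ℂ} (h : singularValues M = singularValues N) (p : ℝ≥0∞) :
    sNormE p M = sNormE p N := by
  rcases eq_or_ne p ⊤ with rfl | hp
  · rw [sNormE_top, sNormE_top, ← norm_singularValues, ← norm_singularValues, h]
  · rw [sNormE_of_ne_top hp, sNormE_of_ne_top hp, sNorm_eq, sNorm_eq, h]

lemma sNormE_conjTranspose (p : ℝ≥0∞) (M : Matrix n n ℂ) : sNormE p Mᴴ = sNormE p M :=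
  sNormE_congr (singularValues_conjTranspose M) p

open scoped MatrixOrder in
lemma conjTranspose_abs_mul_abs (M : Matrix n n ℂ) : (CFC.abs M)ᴴ * CFC.abs M = Mᴴ * M := by
  rw [(CFC.abs_nonneg M).posSemidef.1.eq, CFC.abs_mul_abs, star_eq_conjTranspose]

open scoped MatrixOrder in
lemma sNormE_abs (p : ℝ≥0∞) (M : Matrix n n ℂ) : sNormE p (CFC.abs M) = sNormE p M :=
  sNormE_congr (singularValues_congr (congr_arg charpoly (conjTranspose_abs_mul_abs M))) p

lemma sum_singularValues_mul_rpow_le {a b p : ℝ} (habp : a.HolderTriple b p) (ha : 2 ≤ a)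
    (hb : 2 ≤ b) (K L : Matrix n n ℂ) :
    ∑ i, singularValues (K * L) i ^ p ≤
      (∑ i, singularValues K i ^ a) ^ (p / a) * (∑ i, singularValues L i ^ b) ^ (p / b) := by
  obtain ⟨_, _, hp₀⟩ := habp.all_pos
  let w := leftSingularVector (K * L)
  let v := fun i : {i // singularValues (K * L) i ≠ 0} => rightSingularBasis (K * L) i
  let x := fun i => ‖toEuclideanCLM (𝕜 := ℂ) Kᴴ (w i)‖
  let y := fun i => ‖toEuclideanCLM (𝕜 := ℂ) L (v i)‖
  have hv : Orthonormal ℂ v :=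
    (rightSingularBasis (K * L)).orthonormal.comp _ Subtype.val_injective
  have hσ (i : {i // singularValues (K * L) i ≠ 0}) : singularValues (K * L) i ≤ x i * y i := by
    have hinner : inner ℂ (toEuclideanCLM (𝕜 := ℂ) Kᴴ (w i)) (toEuclideanCLM (𝕜 := ℂ) L (v i)) =
        singularValues (K * L) i := by
      rw [← inner_conjTranspose_mul_apply, conjTranspose_conjTranspose,
        inner_leftSingularVector_apply, if_pos rfl]
    rw [← Real.norm_of_nonneg (singularValues_nonneg (K * L) i), ← Complex.norm_real, ← hinner]
    exact norm_inner_le_norm _ _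
  calc ∑ i, singularValues (K * L) i ^ p
      = ∑ i : {i // singularValues (K * L) i ≠ 0}, singularValues (K * L) i ^ p := by
        refine (Fintype.sum_of_injective _ Subtype.val_injective _ _ (fun i hi => ?_)
          fun _ => rfl).symm
        have hi₀ : singularValues (K * L) i = 0 := by simpa using hi
        rw [hi₀, Real.zero_rpow hp₀.ne']
    _ ≤ ∑ i, (x i * y i) ^ p :=
        Finset.sum_le_sum fun i _ =>
          Real.rpow_le_rpow (singularValues_nonneg (K * L) i) (hσ i) hp₀.le
    _ ≤ (∑ i, x i ^ a) ^ (p / a) * (∑ i, y i ^ b) ^ (p / b) :=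
        Real.Lr_rpow_le_Lp_mul_Lq_of_nonneg Finset.univ habp (fun _ _ => norm_nonneg _)
          fun _ _ => norm_nonneg _
    _ ≤ (∑ i, singularValues K i ^ a) ^ (p / a) * (∑ i, singularValues L i ^ b) ^ (p / b) := by
        rw [← singularValues_conjTranspose K]
        gcongr
        · exact Real.rpow_nonneg (sum_singularValues_rpow_nonneg a Kᴴ) _
        · exact sum_norm_apply_rpow_le Kᴴ ha (orthonormal_leftSingularVector (K * L))
        · exact sum_norm_apply_rpow_le L hb hv

lemma sNorm_mul_le {a b p : ℝ} (habp : a.HolderTriple b p) (ha : 2 ≤ a) (hb : 2 ≤ b)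
    (K L : Matrix n n ℂ) : sNorm p (K * L) ≤ sNorm a K * sNorm b L := by
  have hp₀ : 0 < p := habp.pos'
  have hexp (c : ℝ) : p / c * (1 / p) = 1 / c := by field_simp
  have hK := sum_singularValues_rpow_nonneg a K
  have hL := sum_singularValues_rpow_nonneg b L
  rw [sNorm_eq, sNorm_eq, sNorm_eq, ← hexp a, ← hexp b, Real.rpow_mul hK, Real.rpow_mul hL,
    ← Real.mul_rpow (Real.rpow_nonneg hK _) (Real.rpow_nonneg hL _)]
  exact Real.rpow_le_rpow (sum_singularValues_rpow_nonneg p _)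
    (sum_singularValues_mul_rpow_le habp ha hb K L) (by positivity)

lemma sNormE_mul_le {p : ℝ≥0∞} (hp : 1 ≤ p) (K L : Matrix n n ℂ) :
    sNormE p (K * L) ≤ sNormE (2 * p) K * sNormE (2 * p) L := by
  rcases eq_or_ne p ⊤ with rfl | hp_top
  · simpa only [ENNReal.mul_top two_ne_zero, sNormE_top] using norm_mul_le K L
  · have hp_real : 1 ≤ p.toReal := ENNReal.toReal_mono hp_top hp
    have h2p : 2 * p ≠ ⊤ := ENNReal.mul_ne_top ENNReal.ofNat_ne_top hp_top
    have hdouble : (2 * p).toReal = 2 * p.toReal := by simp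
    have htriple : (2 * p.toReal).HolderTriple (2 * p.toReal) p.toReal :=
      ⟨by field_simp; norm_num, by linarith, by linarith⟩
    simp only [sNormE_of_ne_top hp_top, sNormE_of_ne_top h2p, hdouble]
    exact sNorm_mul_le htriple (by linarith) (by linarith) K L

lemma sNorm_conjTranspose_mul_self (p : ℝ) (M : Matrix n n ℂ) :
    sNorm p (Mᴴ * M) = sNorm (2 * p) M ^ 2 := by
  have hsq (i : n) : (singularValues M i ^ 2) ^ p = singularValues M i ^ (2 * p) := by
    rw [← Real.rpow_natCast_mul (singularValues_nonneg M i), Nat.cast_ofNat]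
  have hexp : 1 / p = 1 / (2 * p) * (2 : ℕ) := by
    rw [one_div_mul_eq_div, Nat.cast_ofNat, div_mul_cancel_left₀ two_ne_zero, one_div]
  rw [sNorm_eq, sNorm_eq, sum_singularValues_conjTranspose_mul_self M (· ^ p), hexp]
  simp only [hsq]
  exact Real.rpow_mul_natCast (sum_singularValues_rpow_nonneg _ M) _ 2

lemma sNormE_conjTranspose_mul_self (p : ℝ≥0∞) (M : Matrix n n ℂ) :
    sNormE p (Mᴴ * M) = sNormE (2 * p) M ^ 2 := by
  rcases eq_or_ne p ⊤ with rfl | hp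
  · rw [ENNReal.mul_top two_ne_zero, sNormE_top, sNormE_top, l2_opNorm_conjTranspose_mul_self,
      pow_two]
  · rw [sNormE_of_ne_top hp, sNormE_of_ne_top (ENNReal.mul_ne_top ENNReal.ofNat_ne_top hp),
      sNorm_conjTranspose_mul_self, ENNReal.toReal_mul, ENNReal.toReal_ofNat]

lemma sNormE_mul_mul_conjTranspose (p : ℝ≥0∞) (M Z : Matrix n n ℂ) :
    sNormE p (M * (Zᴴ * Z) * Mᴴ) = sNormE (2 * p) (M * Zᴴ) ^ 2 := by
  rw [← sNormE_conjTranspose (2 * p), ← sNormE_conjTranspose_mul_self]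
  simp only [conjTranspose_mul, conjTranspose_conjTranspose, mul_assoc]

lemma sNormE_mul_mul_conjTranspose_congr {X : Matrix n n ℂ} (hX : X.PosSemidef)
    {M N : Matrix n n ℂ} (h : Mᴴ * M = Nᴴ * N) (p : ℝ≥0∞) :
    sNormE p (M * X * Mᴴ) = sNormE p (N * X * Nᴴ) := by
  obtain ⟨Z, rfl⟩ := exists_eq_conjTranspose_mul_self hX
  have hgram (M : Matrix n n ℂ) : (M * Zᴴ)ᴴ * (M * Zᴴ) = Z * (Mᴴ * M) * Zᴴ := by
    simp only [conjTranspose_mul, conjTranspose_conjTranspose, mul_assoc]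
  have hσ : singularValues (M * Zᴴ) = singularValues (N * Zᴴ) :=
    singularValues_congr (by rw [hgram, hgram, h])
  rw [sNormE_mul_mul_conjTranspose, sNormE_mul_mul_conjTranspose, sNormE_congr hσ]

lemma sNormE_mul_mul_le_max {X : Matrix n n ℂ} (hX : X.PosSemidef) {p : ℝ≥0∞} (hp : 1 ≤ p)
    (M N : Matrix n n ℂ) :
    sNormE p (M * X * N) ≤ max (sNormE p (M * X * Mᴴ)) (sNormE p (Nᴴ * X * N)) := by
  obtain ⟨Z, rfl⟩ := exists_eq_conjTranspose_mul_self hX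
  have hM := sNormE_mul_mul_conjTranspose p M Z
  have hN : sNormE p (Nᴴ * (Zᴴ * Z) * N) = sNormE (2 * p) (Z * N) ^ 2 := by
    rw [← sNormE_conjTranspose_mul_self, conjTranspose_mul, mul_assoc, mul_assoc, mul_assoc]
  calc sNormE p (M * (Zᴴ * Z) * N)
      = sNormE p ((M * Zᴴ) * (Z * N)) := by simp only [mul_assoc]
    _ ≤ sNormE (2 * p) (M * Zᴴ) * sNormE (2 * p) (Z * N) := sNormE_mul_le hp _ _
    _ ≤ max (sNormE (2 * p) (M * Zᴴ) ^ 2) (sNormE (2 * p) (Z * N) ^ 2) := by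
        rw [pow_two, pow_two]
        rcases le_total (sNormE (2 * p) (M * Zᴴ)) (sNormE (2 * p) (Z * N)) with h | h
        · exact le_max_of_le_right (mul_le_mul_of_nonneg_right h (sNormE_nonneg _ _))
        · exact le_max_of_le_left (mul_le_mul_of_nonneg_left h (sNormE_nonneg _ _))
    _ = max (sNormE p (M * (Zᴴ * Z) * Mᴴ)) (sNormE p (Nᴴ * (Zᴴ * Z) * N)) := by rw [hM, hN]

lemma norm_le_sNormE {p : ℝ≥0∞} (hp : p ≠ 0) (M : Matrix n n ℂ) : ‖M‖ ≤ sNormE p M := by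
  rcases eq_or_ne p ⊤ with rfl | hp_top
  · exact (sNormE_top M).ge
  · have hp_pos : 0 < p.toReal := ENNReal.toReal_pos hp hp_top
    rw [sNormE_of_ne_top hp_top, ← norm_singularValues]
    refine (pi_norm_le_iff_of_nonneg (sNorm_nonneg _ M)).2 fun i => ?_
    rw [Real.norm_of_nonneg (singularValues_nonneg M i), sNorm_eq, one_div,
      Real.le_rpow_inv_iff_of_pos (singularValues_nonneg M i)
        (sum_singularValues_rpow_nonneg _ M) hp_pos]
    exact Finset.single_le_sum (f := fun j => singularValues M j ^ p.toReal)
      (fun j _ => Real.rpow_nonneg (singularValues_nonneg M j) _) (Finset.mem_univ i)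

lemma sNormE_le_card_rpow_mul_norm {p : ℝ≥0∞} (hp : p ≠ 0) (M : Matrix n n ℂ) :
    sNormE p M ≤ (Fintype.card n : ℝ) ^ (1 / p.toReal) * ‖M‖ := by
  rcases eq_or_ne p ⊤ with rfl | hp_top
  · simp [sNormE_top]
  · have hp_pos : 0 < p.toReal := ENNReal.toReal_pos hp hp_top
    have hσ (i : n) : singularValues M i ≤ ‖M‖ :=
      (Real.le_norm_self _).trans (norm_singularValues M ▸ norm_le_pi_norm _ i)
    calc sNormE p M = (∑ i, singularValues M i ^ p.toReal) ^ (1 / p.toReal) := by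
          rw [sNormE_of_ne_top hp_top, sNorm_eq]
      _ ≤ (∑ _i : n, ‖M‖ ^ p.toReal) ^ (1 / p.toReal) := by
          gcongr with i
          · exact sum_singularValues_rpow_nonneg _ M
          · exact singularValues_nonneg M i
          · exact hσ i
      _ = (Fintype.card n : ℝ) ^ (1 / p.toReal) * ‖M‖ := by
          rw [Finset.sum_const, Finset.card_univ, nsmul_eq_mul,
            Real.mul_rpow (Nat.cast_nonneg _) (by positivity), one_div,
            Real.rpow_rpow_inv (norm_nonneg M) hp_pos.ne']

lemma sNormE_zero {p : ℝ≥0∞} (hp : p ≠ 0) : sNormE p (0 : Matrix n n ℂ) = 0 :=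
  le_antisymm (by simpa using sNormE_le_card_rpow_mul_norm hp (0 : Matrix n n ℂ))
    (sNormE_nonneg p 0)

end SchattenNorm

section Kronecker

lemma conjTranspose_kronecker_one {m k : Type*} [DecidableEq k] (A : Matrix m m ℂ) :
    (A ⊗ₖ (1 : Matrix k k ℂ))ᴴ = Aᴴ ⊗ₖ 1 := by
  rw [conjTranspose_kronecker, conjTranspose_one]

variable {m k : Type*} [Fintype m] [DecidableEq m] [Fintype k] [DecidableEq k]

open scoped Matrix.Norms.L2Operator in
lemma bddAbove_sNormE_kronecker {p s : ℝ≥0∞} (hp : p ≠ 0) (hs : s ≠ 0)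
    (X : Matrix (m × k) (m × k) ℂ) :
    BddAbove {c : ℝ | ∃ A B : Matrix m m ℂ, sNormE s A ≤ 1 ∧ sNormE s B ≤ 1 ∧
      c = sNormE p ((A ⊗ₖ (1 : Matrix k k ℂ)) * X * (B ⊗ₖ 1))} := by
  let Φ : Matrix m m ℂ →L[ℂ] Matrix (m × k) (m × k) ℂ :=
    LinearMap.toContinuousLinearMap ((kroneckerBilinear (R := ℂ) (α := ℂ)).flip (1 : Matrix k k ℂ))
  have hΦ {A : Matrix m m ℂ} (hA : sNormE s A ≤ 1) : ‖A ⊗ₖ (1 : Matrix k k ℂ)‖ ≤ ‖Φ‖ :=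
    Φ.unit_le_opNorm A ((norm_le_sNormE hs A).trans hA)
  refine ⟨(Fintype.card (m × k) : ℝ) ^ (1 / p.toReal) * (‖Φ‖ * ‖X‖ * ‖Φ‖), ?_⟩
  rintro _ ⟨A, B, hA, hB, rfl⟩
  refine (sNormE_le_card_rpow_mul_norm hp _).trans ?_
  gcongr
  calc ‖(A ⊗ₖ (1 : Matrix k k ℂ)) * X * (B ⊗ₖ 1)‖
      ≤ ‖A ⊗ₖ (1 : Matrix k k ℂ)‖ * ‖X‖ * ‖B ⊗ₖ (1 : Matrix k k ℂ)‖ := norm_mul₃_le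
    _ ≤ ‖Φ‖ * ‖X‖ * ‖Φ‖ := by
        gcongr
        exacts [hΦ hA, hΦ hB]

lemma sNormE_kronecker_mul_mul_le_max {p : ℝ≥0∞} (hp : 1 ≤ p) {X : Matrix (m × k) (m × k) ℂ}
    (hX : X.PosSemidef) (A B : Matrix m m ℂ) :
    sNormE p ((A ⊗ₖ (1 : Matrix k k ℂ)) * X * (B ⊗ₖ 1)) ≤
      max (sNormE p ((A ⊗ₖ (1 : Matrix k k ℂ)) * X * (Aᴴ ⊗ₖ 1)))
        (sNormE p ((Bᴴ ⊗ₖ (1 : Matrix k k ℂ)) * X * (B ⊗ₖ 1))) := by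
  rw [← conjTranspose_kronecker_one, ← conjTranspose_kronecker_one]
  exact sNormE_mul_mul_le_max hX hp _ _

open scoped MatrixOrder in
lemma exists_posSemidef_sNormE_kronecker_eq {X : Matrix (m × k) (m × k) ℂ} (hX : X.PosSemidef)
    (p s : ℝ≥0∞) (A : Matrix m m ℂ) :
    ∃ P : Matrix m m ℂ, P.PosSemidef ∧ sNormE s P = sNormE s A ∧
      sNormE p ((P ⊗ₖ (1 : Matrix k k ℂ)) * X * (Pᴴ ⊗ₖ 1)) =
        sNormE p ((A ⊗ₖ (1 : Matrix k k ℂ)) * X * (Aᴴ ⊗ₖ 1)) := by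
  refine ⟨CFC.abs A, (CFC.abs_nonneg A).posSemidef, sNormE_abs s A, ?_⟩
  rw [← conjTranspose_kronecker_one, ← conjTranspose_kronecker_one]
  apply sNormE_mul_mul_conjTranspose_congr hX
  rw [conjTranspose_kronecker_one, conjTranspose_kronecker_one, ← mul_kronecker_mul,
    ← mul_kronecker_mul, conjTranspose_abs_mul_abs]

end Kronecker

theorem stmt6_general {m k : Type*} [Fintype m] [DecidableEq m] [Fintype k] [DecidableEq k]
    {p s : ℝ≥0∞} (hp : 1 ≤ p) (hs : s ≠ 0) {X : Matrix (m × k) (m × k) ℂ} (hX : X.PosSemidef) :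
    BddAbove {c : ℝ | ∃ A B : Matrix m m ℂ, sNormE s A ≤ 1 ∧ sNormE s B ≤ 1 ∧
        c = sNormE p ((A ⊗ₖ (1 : Matrix k k ℂ)) * X * (B ⊗ₖ 1))} ∧
    (sSup {c : ℝ | ∃ A B : Matrix m m ℂ, sNormE s A ≤ 1 ∧ sNormE s B ≤ 1 ∧
        c = sNormE p ((A ⊗ₖ (1 : Matrix k k ℂ)) * X * (B ⊗ₖ 1))} =
      sSup {c : ℝ | ∃ A : Matrix m m ℂ, A.PosSemidef ∧ sNormE s A ≤ 1 ∧
        c = sNormE p ((A ⊗ₖ (1 : Matrix k k ℂ)) * X * (Aᴴ ⊗ₖ 1))}) ∧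
    ∀ A B : Matrix m m ℂ,
      sNormE p ((A ⊗ₖ (1 : Matrix k k ℂ)) * X * (B ⊗ₖ 1)) ≤
        max (sNormE p ((A ⊗ₖ (1 : Matrix k k ℂ)) * X * (Aᴴ ⊗ₖ 1)))
          (sNormE p ((Bᴴ ⊗ₖ (1 : Matrix k k ℂ)) * X * (B ⊗ₖ 1))) := by
  set S := {c : ℝ | ∃ A B : Matrix m m ℂ, sNormE s A ≤ 1 ∧ sNormE s B ≤ 1 ∧
    c = sNormE p ((A ⊗ₖ (1 : Matrix k k ℂ)) * X * (B ⊗ₖ 1))}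
  set T := {c : ℝ | ∃ A : Matrix m m ℂ, A.PosSemidef ∧ sNormE s A ≤ 1 ∧
    c = sNormE p ((A ⊗ₖ (1 : Matrix k k ℂ)) * X * (Aᴴ ⊗ₖ 1))}
  have hS : BddAbove S := bddAbove_sNormE_kronecker (zero_lt_one.trans_le hp).ne' hs X
  have hmax := sNormE_kronecker_mul_mul_le_max hp hX
  have hTS : T ⊆ S := by
    rintro _ ⟨A, -, hA, rfl⟩
    exact ⟨A, Aᴴ, hA, (sNormE_conjTranspose s A).trans_le hA, rfl⟩
  have hT : T.Nonempty :=
    ⟨_, 0, PosSemidef.zero, (sNormE_zero hs).trans_le zero_le_one, rfl⟩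
  have hle (A : Matrix m m ℂ) (hA : sNormE s A ≤ 1) :
      sNormE p ((A ⊗ₖ (1 : Matrix k k ℂ)) * X * (Aᴴ ⊗ₖ 1)) ≤ sSup T := by
    obtain ⟨P, hP, hPA, hPX⟩ := exists_posSemidef_sNormE_kronecker_eq hX p s A
    exact le_csSup (hS.mono hTS) ⟨P, hP, hPA.trans_le hA, hPX.symm⟩
  refine ⟨hS, le_antisymm (csSup_le (hT.mono hTS) ?_) (csSup_le_csSup hS hT hTS), hmax⟩
  rintro _ ⟨A, B, hA, hB, rfl⟩
  refine (hmax A B).trans (max_le (hle A hA) ?_)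
  simpa only [conjTranspose_conjTranspose] using
    hle Bᴴ ((sNormE_conjTranspose s B).trans_le hB)

/-- for `1 ≤ p ≤ q ≤ ∞`, `1/p = 1/q + 1/r`, and positive semidefinite `X`,
the sup of `‖(A⊗I) X (B⊗I)‖_{S_p}` over `‖A‖_{S_{2r}}, ‖B‖_{S_{2r}} ≤ 1` equals the sup
restricted to `B = A*` with `A` positive semidefinite; in particular
`‖(A⊗I)X(B⊗I)‖_{S_p} ≤ max(‖(A⊗I)X(A*⊗I)‖_{S_p}, ‖(B*⊗I)X(B⊗I)‖_{S_p})`. -/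
theorem stmt6 {d d' : ℕ} (p q r : ℝ≥0∞) (hp : 1 ≤ p) (hpq : p ≤ q)
    (hr : 1 / p = 1 / q + 1 / r)
    (X : Matrix (Fin d × Fin d') (Fin d × Fin d') ℂ) (hX : X.PosSemidef) :
    (sSup {c : ℝ | ∃ A B : Matrix (Fin d) (Fin d) ℂ,
        sNormE (2 * r) A ≤ 1 ∧ sNormE (2 * r) B ≤ 1 ∧
        c = sNormE p ((A ⊗ₖ (1 : Matrix (Fin d') (Fin d') ℂ)) * X * (B ⊗ₖ 1))} =
      sSup {c : ℝ | ∃ A : Matrix (Fin d) (Fin d) ℂ, A.PosSemidef ∧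
        sNormE (2 * r) A ≤ 1 ∧
        c = sNormE p ((A ⊗ₖ (1 : Matrix (Fin d') (Fin d') ℂ)) * X * (Aᴴ ⊗ₖ 1))}) ∧
    ∀ A B : Matrix (Fin d) (Fin d) ℂ,
      sNormE p ((A ⊗ₖ (1 : Matrix (Fin d') (Fin d') ℂ)) * X * (B ⊗ₖ 1)) ≤
        max (sNormE p ((A ⊗ₖ (1 : Matrix (Fin d') (Fin d') ℂ)) * X * (Aᴴ ⊗ₖ 1)))
          (sNormE p ((Bᴴ ⊗ₖ (1 : Matrix (Fin d') (Fin d') ℂ)) * X * (B ⊗ₖ 1))) := by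
  have hr₀ : r ≠ 0 := by
    rintro rfl
    simp [(zero_lt_one.trans_le hp).ne'] at hr
  exact (stmt6_general hp (mul_ne_zero two_ne_zero hr₀) hX).2
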